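/- Let L be a 2-dimensional K-subspace of Ṽ. Then every 1-dimensional subspace of L belongs to the flag variety 𝒢 if and only if there exists a pencil M of flags such that the set {φ(Φ) : Φ ∈ M} equals the set of all 1-dimensional subspaces of L. In other words, the φ-images of the pencils of flags are exactly the lines contained in 𝒢. -/

import Mathlib

open TensorProduct

/-- A flag of a 3-dimensional projective space: a triple `(P, g, ε)` of subspaces of the
underlying 4-dimensional vector space `V` with `finrank P = 1`, `finrank g = 2`,
`finrank ε = 3` and `P ≤ g ≤ ε`. -/
structure ProjFlag (K : Type*) (V : Type*) [DivisionRing K] [AddCommGroup V]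
    [Module K V] where
  pt : Submodule K V
  ln : Submodule K V
  pl : Submodule K V
  finrank_pt : Module.finrank K pt = 1
  finrank_ln : Module.finrank K ln = 2
  finrank_pl : Module.finrank K pl = 3
  pt_le_ln : pt ≤ ln
  ln_le_pl : ln ≤ pl

variable (K V : Type*) [Field K] [AddCommGroup V] [Module K V]

-- Helper instances (the canonical tensor product instances; registering them here merely
-- speeds up instance search, which otherwise gets lost unfolding `⋀[K]^2 V`).
noncomputable instance : AddCommGroup (↥(⋀[K]^2 V) ⊗[K] Module.Dual K V) :=
  TensorProduct.addCommGroup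

noncomputable instance : AddCommGroup (V ⊗[K] (↥(⋀[K]^2 V) ⊗[K] Module.Dual K V)) :=
  TensorProduct.addCommGroup

/-- The wedge `q ∧ r` of two vectors, as an element of the second exterior power. -/
def wedge2 (q r : V) : ⋀[K]^2 V :=
  ⟨ExteriorAlgebra.ιMulti K 2 ![q, r],
    ExteriorAlgebra.ιMulti_range K 2 (Set.mem_range_self _)⟩

/-- The 96-dimensional space `Ṽ = V ⊗ Λ²V ⊗ V*`. -/
abbrev FlagTensor := V ⊗[K] ↥(⋀[K]^2 V) ⊗[K] (Module.Dual K V)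

/-- `x = φ(Φ)`: the 1-dimensional subspace `x` of `Ṽ` represents the flag `Φ`, i.e. `x` is
spanned by `p ⊗ (q ∧ r) ⊗ e*` where `p` spans the point of `Φ`, `q, r` is a basis of the
line of `Φ`, and `e*` is a linear form whose kernel is the plane of `Φ`. -/
def IsFlagRep (Φ : ProjFlag K V) (x : Submodule K (FlagTensor K V)) : Prop :=
  ∃ (p q r : V) (e : Module.Dual K V),
    Submodule.span K {p} = Φ.pt ∧ Submodule.span K {q, r} = Φ.ln ∧
    LinearMap.ker e = Φ.pl ∧
    x = Submodule.span K {p ⊗ₜ[K] wedge2 K V q r ⊗ₜ[K] e}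

/-- The flag variety `𝒢`: the set of all 1-dimensional subspaces `φ(Φ)` of `Ṽ` with `Φ` a
flag. -/
def flagVariety : Set (Submodule K (FlagTensor K V)) :=
  {x | ∃ Φ : ProjFlag K V, IsFlagRep K V Φ x}

/-- The set `F[g, ε]` of all flags with line component `g` and plane component `ε`. -/
def flagsOfLinePlane (g ε : Submodule K V) : Set (ProjFlag K V) :=
  {Φ : ProjFlag K V | Φ.ln = g ∧ Φ.pl = ε}

/-- The set `F[P, ε]` of all flags with point component `P` and plane component `ε`. -/
def flagsOfPointPlane (P ε : Submodule K V) : Set (ProjFlag K V) :=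
  {Φ : ProjFlag K V | Φ.pt = P ∧ Φ.pl = ε}

/-- The set `F[P, g]` of all flags with point component `P` and line component `g`. -/
def flagsOfPointLine (P g : Submodule K V) : Set (ProjFlag K V) :=
  {Φ : ProjFlag K V | Φ.pt = P ∧ Φ.ln = g}

/-- `M` is a pencil (of type 0, 1 or 2). -/
def IsPencil (M : Set (ProjFlag K V)) : Prop :=
  (∃ g ε : Submodule K V, Module.finrank K g = 2 ∧ Module.finrank K ε = 3 ∧ g ≤ ε ∧
    M = flagsOfLinePlane K V g ε) ∨
  (∃ P ε : Submodule K V, Module.finrank K P = 1 ∧ Module.finrank K ε = 3 ∧ P ≤ ε ∧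
    M = flagsOfPointPlane K V P ε) ∨
  (∃ P g : Submodule K V, Module.finrank K P = 1 ∧ Module.finrank K g = 2 ∧ P ≤ g ∧
    M = flagsOfPointLine K V P g)

/-!
A flag `(P, g, ε)` is represented by the decomposable subspace `P ⊗ Λ²g ⊗ ε⊥`. If `u`, `v` and
`u + v` are decomposable tensors, then `u` and `v` are proportional in all but one of their factors;
hence two flags on a line `L` contained in `𝒢` share two of their three components and lie in a
common pencil. Conversely the flags of a pencil are the points of a 2-dimensional subspace of `Ṽ`:
`g ⊗ Λ²g ⊗ ε⊥`, `P ⊗ (P ∧ ε) ⊗ ε⊥` or `P ⊗ Λ²g ⊗ g⊥`, because `Λ²g = P ∧ g` for `P ≤ g`.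
-/

open Module Submodule

section LinearAlgebra

variable {K M : Type*} [DivisionRing K] [AddCommGroup M] [Module K M]

theorem span_singleton_eq_of_mem {x y : M} (hx : x ≠ 0) (h : x ∈ K ∙ y) : K ∙ x = K ∙ y := by
  obtain ⟨c, rfl⟩ := mem_span_singleton.1 h
  exact span_singleton_smul_eq (left_ne_zero_of_smul hx).isUnit y

theorem exists_span_singleton_eq {S : Submodule K M} (hS : finrank K S = 1) :
    ∃ x, K ∙ x = S := by
  have : FiniteDimensional K S := finite_of_finrank_pos (by lia)
  obtain ⟨x, hx, hx0⟩ := S.exists_mem_ne_zero_of_ne_bot (one_le_finrank_iff.1 hS.ge)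
  refine ⟨x, eq_of_le_of_finrank_eq ((span_singleton_le_iff_mem x S).2 hx) ?_⟩
  rw [finrank_span_singleton hx0, hS]

theorem ne_zero_of_finrank_span_singleton {x : M} (hx : finrank K (K ∙ x) = 1) : x ≠ 0 := by
  rintro rfl
  rw [span_zero_singleton, finrank_bot] at hx
  exact zero_ne_one hx

theorem finrank_span_pair_eq_two_iff {x y : M} :
    finrank K (span K {x, y}) = 2 ↔ LinearIndependent K ![x, y] := by
  rw [linearIndependent_iff_card_eq_finrank_span, Set.finrank,
    Matrix.range_cons_cons_empty, Fintype.card_fin, eq_comm]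

theorem exists_span_pair_eq {S : Submodule K M} (hS : finrank K S = 2) :
    ∃ x y, span K {x, y} = S := by
  have : FiniteDimensional K S := finite_of_finrank_pos (by lia)
  let b := finBasisOfFinrankEq K S hS
  refine ⟨b 0, b 1, ?_⟩
  have hb : span K {b 0, b 1} = ⊤ := by
    rw [← b.span_eq, ← FinVec.etaExpand_eq b, ← Matrix.range_cons_cons_empty _ _ ![]]
    rfl
  simpa only [map_span, Set.image_pair, map_subtype_top, subtype_apply] using
    congrArg (Submodule.map S.subtype) hb

end LinearAlgebra

section PureTensors

variable {K M N X : Type*} [Field K] [AddCommGroup M] [Module K M] [AddCommGroup N] [Module K N]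
  [AddCommGroup X] [Module K X]

/-- Contraction of the right factor of a tensor with a linear form. -/
noncomputable def contractSnd (f : Dual K N) : M ⊗[K] N →ₗ[K] M :=
  TensorProduct.rid K M ∘ₗ f.lTensor M

theorem contractSnd_tmul (f : Dual K N) (a : M) (b : N) :
    contractSnd f (a ⊗ₜ[K] b) = f b • a := by
  simp [contractSnd]

theorem tensorMk_flip_injective {b : N} (hb : b ≠ 0) :
    Function.Injective ((TensorProduct.mk K M N).flip b) := by
  obtain ⟨f, hf⟩ := Projective.exists_dual_ne_zero K hb
  intro a a' h
  have := congrArg (contractSnd f) h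
  simp only [LinearMap.flip_apply, TensorProduct.mk_apply, contractSnd_tmul] at this
  exact smul_right_injective M hf this

theorem tensorMk_injective {a : M} (ha : a ≠ 0) :
    Function.Injective (TensorProduct.mk K M N a) := by
  intro b b' h
  exact tensorMk_flip_injective ha (congrArg (TensorProduct.comm K M N) h)

theorem span_left_eq_of_tmul_eq {a x : M} {b y : N} (h0 : a ⊗ₜ[K] b ≠ 0)
    (h : a ⊗ₜ[K] b = x ⊗ₜ[K] y) : K ∙ a = K ∙ x := by
  have ha : a ≠ 0 := by rintro rfl; simp at h0
  have hb : b ≠ 0 := by rintro rfl; simp at h0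
  obtain ⟨f, hf⟩ := Projective.exists_dual_ne_zero K hb
  have hc : f b • a = f y • x := by
    simpa only [contractSnd_tmul] using congrArg (contractSnd f) h
  refine span_singleton_eq_of_mem ha (mem_span_singleton.2 ⟨(f b)⁻¹ * f y, ?_⟩)
  rw [mul_smul, ← hc, inv_smul_smul₀ hf]

theorem span_right_eq_of_tmul_eq {a x : M} {b y : N} (h0 : a ⊗ₜ[K] b ≠ 0)
    (h : a ⊗ₜ[K] b = x ⊗ₜ[K] y) : K ∙ b = K ∙ y :=
  span_left_eq_of_tmul_eq (by simpa using (TensorProduct.comm K M N).map_ne_zero_iff.2 h0)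
    (congrArg (TensorProduct.comm K M N) h)

theorem span_eq_or_span_eq_of_tmul_add_tmul_eq {a c x : M} {b d y : N} (hab : a ⊗ₜ[K] b ≠ 0)
    (hcd : c ⊗ₜ[K] d ≠ 0) (h : a ⊗ₜ[K] b + c ⊗ₜ[K] d = x ⊗ₜ[K] y) :
    K ∙ a = K ∙ c ∨ K ∙ b = K ∙ d := by
  by_contra! hne
  have hc : c ≠ 0 := by rintro rfl; simp at hcd
  have hd : d ≠ 0 := by rintro rfl; simp at hcd
  obtain ⟨f, hfd, hfb⟩ := exists_le_ker_of_notMem fun hdb : d ∈ K ∙ b =>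
    hne.2 (span_singleton_eq_of_mem hd hdb).symm
  have hfb : f b = 0 := hfb (mem_span_singleton_self b)
  have hcx : f d • c = f y • x := by
    simpa only [map_add, contractSnd_tmul, hfb, zero_smul, zero_add] using
      congrArg (contractSnd f) h
  have hfy : f y ≠ 0 := fun h0 => smul_ne_zero hfd hc (by rw [hcx, h0, zero_smul])
  have hx : x = ((f y)⁻¹ * f d) • c := by rw [mul_smul, hcx, inv_smul_smul₀ hfy]
  refine hne.1 (span_left_eq_of_tmul_eq (y := ((f y)⁻¹ * f d) • y - d) hab ?_)
  rw [eq_sub_of_add_eq h, hx, TensorProduct.tmul_sub, TensorProduct.smul_tmul]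

theorem span_eq_and_span_eq_of_span_tmul_eq {a c : M} {b d : N} (h0 : a ⊗ₜ[K] b ≠ 0)
    (h : K ∙ a ⊗ₜ[K] b = K ∙ c ⊗ₜ[K] d) : K ∙ a = K ∙ c ∧ K ∙ b = K ∙ d := by
  obtain ⟨t, ht⟩ := mem_span_singleton.1 (h ▸ mem_span_singleton_self (a ⊗ₜ[K] b))
  have ht0 : IsUnit t := .mk0 t (by rintro rfl; exact h0 (by rw [← ht, zero_smul]))
  rw [TensorProduct.smul_tmul'] at ht
  exact ⟨(span_left_eq_of_tmul_eq h0 ht.symm).trans (span_singleton_smul_eq ht0 c),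
    span_right_eq_of_tmul_eq h0 ht.symm⟩

theorem two_span_eq_of_tmul_add_tmul_eq {a c x : M} {b d y : N} {e f z : X}
    (hu : a ⊗ₜ[K] b ⊗ₜ[K] e ≠ 0) (hv : c ⊗ₜ[K] d ⊗ₜ[K] f ≠ 0)
    (h : a ⊗ₜ[K] b ⊗ₜ[K] e + c ⊗ₜ[K] d ⊗ₜ[K] f = x ⊗ₜ[K] y ⊗ₜ[K] z) :
    (K ∙ b = K ∙ d ∧ K ∙ e = K ∙ f) ∨ (K ∙ a = K ∙ c ∧ K ∙ e = K ∙ f) ∨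
      (K ∙ a = K ∙ c ∧ K ∙ b = K ∙ d) := by
  have hab : a ⊗ₜ[K] b ≠ 0 := fun h0 => hu (by rw [h0, TensorProduct.zero_tmul])
  have hbe : b ⊗ₜ[K] e ≠ 0 := fun h0 => hu <| (TensorProduct.assoc K M N X).map_eq_zero_iff.1 <| by
    rw [TensorProduct.assoc_tmul, h0, TensorProduct.tmul_zero]
  have hleft := span_eq_or_span_eq_of_tmul_add_tmul_eq hu hv h
  have hright := span_eq_or_span_eq_of_tmul_add_tmul_eq
    ((TensorProduct.assoc K M N X).map_ne_zero_iff.2 hu)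
    ((TensorProduct.assoc K M N X).map_ne_zero_iff.2 hv)
    ((map_add (TensorProduct.assoc K M N X) _ _).symm.trans
      (congrArg (TensorProduct.assoc K M N X) h))
  have hsplit_ab := span_eq_and_span_eq_of_span_tmul_eq (c := c) (d := d) hab
  have hsplit_be := span_eq_and_span_eq_of_span_tmul_eq (c := d) (d := f) hbe
  tauto

end PureTensors

section ProjPoints

variable {K M N : Type*} [DivisionRing K] [AddCommGroup M] [Module K M]
  [AddCommGroup N] [Module K N]

/-- The points of the projective space of `W`, as 1-dimensional subspaces of `W`. -/
def projPoints (W : Submodule K M) : Set (Submodule K M) :=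
  {P | finrank K P = 1 ∧ P ≤ W}

theorem span_singleton_mem_projPoints {W : Submodule K M} {x : M} (hx : x ≠ 0) (hxW : x ∈ W) :
    K ∙ x ∈ projPoints W :=
  ⟨finrank_span_singleton hx, (span_singleton_le_iff_mem x W).2 hxW⟩

theorem projPoints_map {f : M →ₗ[K] N} (hf : Function.Injective f) (W : Submodule K M) :
    projPoints (W.map f) = map f '' projPoints W := by
  have hfin (P : Submodule K M) : finrank K (P.map f) = finrank K P :=
    (P.equivMapOfInjective f hf).finrank_eq.symm
  ext Q
  constructor
  · rintro ⟨hQ, hQW⟩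
    have hPQ : (Q.comap f).map f = Q := map_comap_eq_self (hQW.trans LinearMap.map_le_range)
    have hPW := (map_le_map_iff_of_injective hf _ _).1 (hPQ.trans_le hQW)
    exact ⟨Q.comap f, ⟨by rw [← hfin, hPQ, hQ], hPW⟩, hPQ⟩
  · rintro ⟨P, ⟨hP, hPW⟩, rfl⟩
    exact ⟨by rwa [hfin], map_mono hPW⟩

end ProjPoints

section TensorSubspace

variable {K M N X : Type*} [Field K] [AddCommGroup M] [Module K M] [AddCommGroup N] [Module K N]
  [AddCommGroup X] [Module K X]

theorem finrank_map₂_mk (A : Submodule K M) (B : Submodule K N) :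
    finrank K (map₂ (TensorProduct.mk K M N) A B) = finrank K A * finrank K B := by
  rw [← TensorProduct.range_mapIncl, LinearMap.finrank_range_of_inj, finrank_tensorProduct]
  exact Flat.tensorProduct_mapIncl_injective_of_left A B

/-- The subspace `A ⊗ B ⊗ C` of `M ⊗ N ⊗ X`. -/
def tensorSubspace (A : Submodule K M) (B : Submodule K N) (C : Submodule K X) :
    Submodule K (M ⊗[K] N ⊗[K] X) :=
  map₂ (TensorProduct.mk K (M ⊗[K] N) X) (map₂ (TensorProduct.mk K M N) A B) C

theorem finrank_tensorSubspace (A : Submodule K M) (B : Submodule K N) (C : Submodule K X) :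
    finrank K (tensorSubspace A B C) = finrank K A * finrank K B * finrank K C := by
  rw [tensorSubspace, finrank_map₂_mk, finrank_map₂_mk]

theorem tensorSubspace_span_singleton (a : M) (b : N) (c : X) :
    tensorSubspace (K ∙ a) (K ∙ b) (K ∙ c) = K ∙ (a ⊗ₜ[K] b ⊗ₜ[K] c) := by
  simp only [tensorSubspace, map₂_span_span, Set.image2_singleton, TensorProduct.mk_apply]

theorem exists_eq_tmul_of_mem_tensorSubspace {A : Submodule K M} {B : Submodule K N}
    {C : Submodule K X} (hA : finrank K A = 1) (hB : finrank K B = 1) (hC : finrank K C = 1)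
    {t : M ⊗[K] N ⊗[K] X} (ht : t ∈ tensorSubspace A B C) (ht0 : t ≠ 0) :
    ∃ a b c, K ∙ a = A ∧ K ∙ b = B ∧ K ∙ c = C ∧ t = a ⊗ₜ[K] b ⊗ₜ[K] c := by
  obtain ⟨a, rfl⟩ := exists_span_singleton_eq hA
  obtain ⟨b, rfl⟩ := exists_span_singleton_eq hB
  obtain ⟨c, rfl⟩ := exists_span_singleton_eq hC
  rw [tensorSubspace_span_singleton] at ht
  obtain ⟨k, rfl⟩ := mem_span_singleton.1 ht
  have hk : IsUnit k := (left_ne_zero_of_smul ht0).isUnit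
  exact ⟨a, b, k • c, rfl, rfl, span_singleton_smul_eq hk c, (TensorProduct.tmul_smul ..).symm⟩

theorem projPoints_map₂_mk_left (A : Submodule K M) {B : Submodule K N} (hB : finrank K B = 1) :
    projPoints (map₂ (TensorProduct.mk K M N) A B) =
      (map₂ (TensorProduct.mk K M N) · B) '' projPoints A := by
  obtain ⟨b, rfl⟩ := exists_span_singleton_eq hB
  simp only [map₂_span_singleton_eq_map_flip]
  exact projPoints_map (tensorMk_flip_injective (ne_zero_of_finrank_span_singleton hB)) A

theorem projPoints_map₂_mk_right {A : Submodule K M} (hA : finrank K A = 1) (B : Submodule K N) :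
    projPoints (map₂ (TensorProduct.mk K M N) A B) =
      map₂ (TensorProduct.mk K M N) A '' projPoints B := by
  obtain ⟨a, rfl⟩ := exists_span_singleton_eq hA
  simp only [map₂_span_singleton_eq_map]
  exact projPoints_map (tensorMk_injective (ne_zero_of_finrank_span_singleton hA)) B

theorem projPoints_tensorSubspace_left (A : Submodule K M) {B : Submodule K N}
    {C : Submodule K X} (hB : finrank K B = 1) (hC : finrank K C = 1) :
    projPoints (tensorSubspace A B C) = (tensorSubspace · B C) '' projPoints A := by
  simp only [tensorSubspace]
  rw [projPoints_map₂_mk_left _ hC, projPoints_map₂_mk_left _ hB, Set.image_image]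

theorem projPoints_tensorSubspace_middle {A : Submodule K M} (B : Submodule K N)
    {C : Submodule K X} (hA : finrank K A = 1) (hC : finrank K C = 1) :
    projPoints (tensorSubspace A B C) = (tensorSubspace A · C) '' projPoints B := by
  simp only [tensorSubspace]
  rw [projPoints_map₂_mk_left _ hC, projPoints_map₂_mk_right hA, Set.image_image]

theorem projPoints_tensorSubspace_right {A : Submodule K M} {B : Submodule K N}
    (C : Submodule K X) (hA : finrank K A = 1) (hB : finrank K B = 1) :
    projPoints (tensorSubspace A B C) = tensorSubspace A B '' projPoints C :=
  projPoints_map₂_mk_right (by rw [finrank_map₂_mk, hA, hB]) C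

end TensorSubspace

section Wedge

variable {K V}

open ExteriorAlgebra (ι ιMulti)

theorem ιMulti_ne_zero_iff {n : ℕ} {v : Fin n → V} : ιMulti K n v ≠ 0 ↔ LinearIndependent K v := by
  refine ⟨fun h => ?_, fun hv => ?_⟩
  · contrapose! h
    exact (ιMulti K n).map_linearDependent v h
  · have := (exteriorPower.ιMulti_family_linearIndependent_field n hv).ne_zero
      (Set.powersetCard.ofFinEmbEquiv (RelEmbedding.refl _))
    simpa [← exteriorPower.ιMulti_apply_coe, exteriorPower.ιMulti_family] using this

theorem coe_wedge2 (q r : V) : (wedge2 K V q r : ExteriorAlgebra K V) = ι K q * ι K r := by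
  simp [wedge2, ExteriorAlgebra.ιMulti_apply]

theorem wedge2_self (x : V) : wedge2 K V x x = 0 :=
  Subtype.ext (by simp [coe_wedge2])

theorem wedge2_ne_zero_iff {q r : V} : wedge2 K V q r ≠ 0 ↔ LinearIndependent K ![q, r] := by
  rw [← ιMulti_ne_zero_iff, Ne, ← Submodule.coe_eq_zero]
  rfl

/-- The wedge product of vectors as a bilinear map. -/
noncomputable def wedge2ₗ : V →ₗ[K] V →ₗ[K] ⋀[K]^2 V :=
  LinearMap.mk₂ K (wedge2 K V)
    (fun _ _ _ => Subtype.ext (by simp only [coe_wedge2, map_add, add_mul, coe_add]))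
    (fun _ _ _ => Subtype.ext (by simp only [coe_wedge2, map_smul, smul_mul_assoc, coe_smul]))
    (fun _ _ _ => Subtype.ext (by simp only [coe_wedge2, map_add, mul_add, coe_add]))
    (fun _ _ _ => Subtype.ext (by simp only [coe_wedge2, map_smul, mul_smul_comm, coe_smul]))

theorem wedge2ₗ_apply (q r : V) : wedge2ₗ q r = wedge2 K V q r := rfl

theorem ker_wedge2ₗ {p : V} (hp : p ≠ 0) : LinearMap.ker (wedge2ₗ (K := K) p) = K ∙ p := by
  ext x
  rw [LinearMap.mem_ker, wedge2ₗ_apply, ← not_iff_not, ← Ne, wedge2_ne_zero_iff,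
    LinearIndependent.pair_iff' hp, mem_span_singleton, not_exists]

theorem map₂_wedge2ₗ_span_pair (q r : V) :
    map₂ wedge2ₗ (span K {q, r}) (span K {q, r}) = K ∙ wedge2 K V q r := by
  have hswap : wedge2 K V r q = -wedge2 K V q r :=
    Subtype.ext (by simp [coe_wedge2, eq_neg_iff_add_eq_zero, ExteriorAlgebra.ι_add_mul_swap])
  rw [map₂_span_span]
  refine le_antisymm (span_le.2 ?_)
    (span_mono (Set.singleton_subset_iff.2 ⟨q, by simp, r, by simp, rfl⟩))
  rintro _ ⟨x, rfl | rfl, y, rfl | rfl, rfl⟩ <;>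
    simp [wedge2ₗ_apply, wedge2_self, hswap, mem_span_singleton_self]

theorem finrank_map₂_wedge2ₗ_self {g : Submodule K V} (hg : finrank K g = 2) :
    finrank K (map₂ wedge2ₗ g g) = 1 := by
  obtain ⟨q, r, rfl⟩ := exists_span_pair_eq hg
  rw [map₂_wedge2ₗ_span_pair]
  exact finrank_span_singleton (wedge2_ne_zero_iff.2 (finrank_span_pair_eq_two_iff.1 hg))

theorem mem_iff_forall_ι_mul_eq_zero {g : Submodule K V} (hg : finrank K g = 2) {x : V} :
    x ∈ g ↔ ∀ w ∈ map₂ wedge2ₗ g g, ι K x * (w : ExteriorAlgebra K V) = 0 := by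
  obtain ⟨q, r, rfl⟩ := exists_span_pair_eq hg
  have hmul : ι K x * wedge2 K V q r = ιMulti K 3 ![x, q, r] := by
    simp [coe_wedge2, ExteriorAlgebra.ιMulti_apply]
  have hmem : x ∈ span K {q, r} ↔ ι K x * wedge2 K V q r = 0 := by
    rw [hmul, ← not_iff_not, ← Ne, ιMulti_ne_zero_iff, ← Matrix.range_cons_cons_empty q r ![]]
    exact (and_iff_right (finrank_span_pair_eq_two_iff.1 hg)).symm.trans
      linearIndependent_finCons.symm
  rw [hmem, map₂_wedge2ₗ_span_pair]
  refine ⟨fun h w hw => ?_, fun h => h _ (mem_span_singleton_self _)⟩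
  obtain ⟨c, rfl⟩ := mem_span_singleton.1 hw
  rw [coe_smul, mul_smul_comm, h, smul_zero]

theorem eq_of_map₂_wedge2ₗ_self_eq {g h : Submodule K V} (hg : finrank K g = 2)
    (hh : finrank K h = 2) (hgh : map₂ wedge2ₗ g g = map₂ wedge2ₗ h h) : g = h := by
  ext x
  rw [mem_iff_forall_ι_mul_eq_zero hg, mem_iff_forall_ι_mul_eq_zero hh, hgh]

theorem finrank_map₂_wedge2ₗ_add_one {P A : Submodule K V} [FiniteDimensional K A]
    (hP : finrank K P = 1) (hPA : P ≤ A) : finrank K (map₂ wedge2ₗ P A) + 1 = finrank K A := by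
  obtain ⟨p, rfl⟩ := exists_span_singleton_eq hP
  have hker : LinearMap.ker ((wedge2ₗ p).domRestrict A) = (K ∙ p).submoduleOf A := by
    rw [LinearMap.ker_domRestrict, ker_wedge2ₗ (ne_zero_of_finrank_span_singleton hP)]
    rfl
  rw [map₂_span_singleton_eq_map, ← LinearMap.range_domRestrict,
    ← ((wedge2ₗ p).domRestrict A).finrank_range_add_finrank_ker, hker,
    (submoduleOfEquivOfLe hPA).finrank_eq, hP]

theorem map₂_wedge2ₗ_self_eq_of_le {P g : Submodule K V} (hP : finrank K P = 1)
    (hg : finrank K g = 2) (hPg : P ≤ g) : map₂ wedge2ₗ g g = map₂ wedge2ₗ P g := by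
  have : FiniteDimensional K g := finite_of_finrank_pos (by lia)
  have hPgg := finrank_map₂_wedge2ₗ_add_one hP hPg
  have : FiniteDimensional K (map₂ wedge2ₗ g g) :=
    .of_finrank_pos (by rw [finrank_map₂_wedge2ₗ_self hg]; lia)
  refine (eq_of_le_of_finrank_eq (map₂_le_map₂_left hPg) ?_).symm
  rw [finrank_map₂_wedge2ₗ_self hg]
  lia

theorem projPoints_map₂_wedge2ₗ {P A : Submodule K V} [FiniteDimensional K A]
    (hP : finrank K P = 1) (hPA : P ≤ A) :
    projPoints (map₂ wedge2ₗ P A) = map₂ wedge2ₗ P '' {g | finrank K g = 2 ∧ P ≤ g ∧ g ≤ A} := by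
  have hfin {g : Submodule K V} (hPg : P ≤ g) (hgA : g ≤ A) :
      finrank K (map₂ wedge2ₗ P g) + 1 = finrank K g :=
    have : FiniteDimensional K g := finiteDimensional_of_le hgA
    finrank_map₂_wedge2ₗ_add_one hP hPg
  ext Q
  constructor
  · rintro ⟨hQ, hQA⟩
    obtain ⟨p, rfl⟩ := exists_span_singleton_eq hP
    let g := A ⊓ Q.comap (wedge2ₗ p)
    have hgQ : map₂ wedge2ₗ (K ∙ p) g = Q := by
      rw [map₂_span_singleton_eq_map] at hQA ⊢
      rw [← map_inf_eq_map_inf_comap, inf_eq_right.2 hQA]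
    have hpg : K ∙ p ≤ g := by
      refine le_inf hPA ((span_singleton_le_iff_mem _ _).2 ?_)
      rw [mem_comap, wedge2ₗ_apply, wedge2_self]
      exact Q.zero_mem
    exact ⟨g, ⟨by rw [← hfin hpg inf_le_left, hgQ, hQ], hpg, inf_le_left⟩, hgQ⟩
  · rintro ⟨g, ⟨hg, hPg, hgA⟩, rfl⟩
    exact ⟨Nat.succ_injective ((hfin hPg hgA).trans hg), map₂_le_map₂_right hgA⟩

end Wedge

section DualAnnihilator

variable {K V}

theorem dualAnnihilator_ker (e : Dual K V) : (LinearMap.ker e).dualAnnihilator = K ∙ e := by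
  have hker : LinearMap.ker e = (K ∙ e).dualCoannihilator :=
    SetLike.coe_injective (by rw [coe_dualCoannihilator_span]; ext x; simp)
  rw [hker, Subspace.dualCoannihilator_dualAnnihilator_eq]

theorem finrank_dualAnnihilator_eq_one_iff [FiniteDimensional K V] {A : Submodule K V} :
    finrank K A.dualAnnihilator = 1 ↔ finrank K A + 1 = finrank K V := by
  have := Subspace.finrank_add_finrank_dualAnnihilator_eq A
  lia

theorem projPoints_dualAnnihilator [FiniteDimensional K V] (g : Submodule K V) :
    projPoints g.dualAnnihilator =
      dualAnnihilator '' {ε | finrank K ε + 1 = finrank K V ∧ g ≤ ε} := by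
  ext Q
  constructor
  · rintro ⟨hQ, hQg⟩
    obtain ⟨e, rfl⟩ := exists_span_singleton_eq hQ
    rw [← dualAnnihilator_ker] at hQ hQg ⊢
    exact ⟨_, ⟨finrank_dualAnnihilator_eq_one_iff.1 hQ,
      Subspace.dualAnnihilator_le_dualAnnihilator_iff.1 hQg⟩, rfl⟩
  · rintro ⟨ε, ⟨hε, hgε⟩, rfl⟩
    exact ⟨finrank_dualAnnihilator_eq_one_iff.2 hε, dualAnnihilator_anti hgε⟩

end DualAnnihilator

section FlagVariety

variable {K V}

/-- The subspace `φ(Φ) = P ⊗ Λ²g ⊗ ε⊥` of `Ṽ` for a flag `Φ = (P, g, ε)`; the orthogonal `ε⊥ ≤ V*`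
is spanned by any linear form with kernel `ε`, so no basis has to be chosen. -/
noncomputable def ProjFlag.tensorLine (Φ : ProjFlag K V) : Submodule K (FlagTensor K V) :=
  tensorSubspace Φ.pt (map₂ wedge2ₗ Φ.ln Φ.ln) Φ.pl.dualAnnihilator

theorem ProjFlag.finrank_dualAnnihilator_pl (hV : finrank K V = 4) (Φ : ProjFlag K V) :
    finrank K Φ.pl.dualAnnihilator = 1 := by
  have : FiniteDimensional K V := finite_of_finrank_pos (by lia)
  rw [finrank_dualAnnihilator_eq_one_iff, Φ.finrank_pl, hV]

theorem isFlagRep_iff (hV : finrank K V = 4) {Φ : ProjFlag K V}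
    {x : Submodule K (FlagTensor K V)} : IsFlagRep K V Φ x ↔ x = Φ.tensorLine := by
  have hcoord {p q r : V} {e : Dual K V} (hp : K ∙ p = Φ.pt) (hg : span K {q, r} = Φ.ln)
      (he : LinearMap.ker e = Φ.pl) :
      Φ.tensorLine = K ∙ (p ⊗ₜ[K] wedge2 K V q r ⊗ₜ[K] e) := by
    rw [ProjFlag.tensorLine, ← hp, ← hg, ← he, map₂_wedge2ₗ_span_pair, dualAnnihilator_ker,
      tensorSubspace_span_singleton]
  constructor
  · rintro ⟨p, q, r, e, hp, hg, he, rfl⟩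
    exact (hcoord hp hg he).symm
  · rintro rfl
    obtain ⟨p, hp⟩ := exists_span_singleton_eq Φ.finrank_pt
    obtain ⟨q, r, hg⟩ := exists_span_pair_eq Φ.finrank_ln
    obtain ⟨e, he⟩ := exists_span_singleton_eq (Φ.finrank_dualAnnihilator_pl hV)
    rw [← dualAnnihilator_ker, Subspace.dualAnnihilator_inj] at he
    exact ⟨p, q, r, e, hp, hg, he, hcoord hp hg he⟩

theorem flagVariety_eq_range (hV : finrank K V = 4) :
    flagVariety K V = Set.range ProjFlag.tensorLine := by
  ext x
  simp only [flagVariety, isFlagRep_iff hV, Set.mem_ofPred_eq, Set.mem_range, eq_comm]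

theorem setOf_isFlagRep_eq_image (hV : finrank K V = 4) (M : Set (ProjFlag K V)) :
    {x | ∃ Φ ∈ M, IsFlagRep K V Φ x} = ProjFlag.tensorLine '' M := by
  ext x
  simp only [isFlagRep_iff hV, Set.mem_ofPred_eq, Set.mem_image, eq_comm]

theorem image_tensorLine_flagsOfLinePlane (hV : finrank K V = 4) {g ε : Submodule K V}
    (hg : finrank K g = 2) (hε : finrank K ε = 3) (hgε : g ≤ ε) :
    ProjFlag.tensorLine '' flagsOfLinePlane K V g ε =
      projPoints (tensorSubspace g (map₂ wedge2ₗ g g) ε.dualAnnihilator) := by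
  have : FiniteDimensional K V := finite_of_finrank_pos (by lia)
  rw [projPoints_tensorSubspace_left g (finrank_map₂_wedge2ₗ_self hg)
    (finrank_dualAnnihilator_eq_one_iff.2 (by rw [hε, hV]))]
  ext x
  constructor
  · rintro ⟨Φ, ⟨rfl, rfl⟩, rfl⟩
    exact ⟨Φ.pt, ⟨Φ.finrank_pt, Φ.pt_le_ln⟩, rfl⟩
  · rintro ⟨P, ⟨hP, hPg⟩, rfl⟩
    exact ⟨⟨P, g, ε, hP, hg, hε, hPg, hgε⟩, ⟨rfl, rfl⟩, rfl⟩

theorem image_tensorLine_flagsOfPointPlane (hV : finrank K V = 4) {P ε : Submodule K V}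
    (hP : finrank K P = 1) (hε : finrank K ε = 3) (hPε : P ≤ ε) :
    ProjFlag.tensorLine '' flagsOfPointPlane K V P ε =
      projPoints (tensorSubspace P (map₂ wedge2ₗ P ε) ε.dualAnnihilator) := by
  have : FiniteDimensional K V := finite_of_finrank_pos (by lia)
  rw [projPoints_tensorSubspace_middle _ hP (finrank_dualAnnihilator_eq_one_iff.2 (by rw [hε, hV])),
    projPoints_map₂_wedge2ₗ hP hPε, Set.image_image]
  ext x
  constructor
  · rintro ⟨Φ, ⟨rfl, rfl⟩, rfl⟩
    refine ⟨Φ.ln, ⟨Φ.finrank_ln, Φ.pt_le_ln, Φ.ln_le_pl⟩, ?_⟩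
    rw [ProjFlag.tensorLine, map₂_wedge2ₗ_self_eq_of_le hP Φ.finrank_ln Φ.pt_le_ln]
  · rintro ⟨g, ⟨hg, hPg, hgε⟩, rfl⟩
    refine ⟨⟨P, g, ε, hP, hg, hε, hPg, hgε⟩, ⟨rfl, rfl⟩, ?_⟩
    rw [ProjFlag.tensorLine, map₂_wedge2ₗ_self_eq_of_le hP hg hPg]

theorem image_tensorLine_flagsOfPointLine (hV : finrank K V = 4) {P g : Submodule K V}
    (hP : finrank K P = 1) (hg : finrank K g = 2) (hPg : P ≤ g) :
    ProjFlag.tensorLine '' flagsOfPointLine K V P g =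
      projPoints (tensorSubspace P (map₂ wedge2ₗ g g) g.dualAnnihilator) := by
  have : FiniteDimensional K V := finite_of_finrank_pos (by lia)
  rw [projPoints_tensorSubspace_right _ hP (finrank_map₂_wedge2ₗ_self hg),
    projPoints_dualAnnihilator, Set.image_image, hV]
  ext x
  constructor
  · rintro ⟨Φ, ⟨rfl, rfl⟩, rfl⟩
    exact ⟨Φ.pl, ⟨by rw [Φ.finrank_pl], Φ.ln_le_pl⟩, rfl⟩
  · rintro ⟨ε, ⟨hε, hgε⟩, rfl⟩
    exact ⟨⟨P, g, ε, hP, hg, by lia, hPg, hgε⟩, ⟨rfl, rfl⟩, rfl⟩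

theorem IsPencil.exists_image_tensorLine_eq_projPoints (hV : finrank K V = 4)
    {M : Set (ProjFlag K V)} (hM : IsPencil K V M) :
    ∃ S : Submodule K (FlagTensor K V),
      finrank K S = 2 ∧ ProjFlag.tensorLine '' M = projPoints S := by
  have : FiniteDimensional K V := finite_of_finrank_pos (by lia)
  have hann (A : Submodule K V) : finrank K A.dualAnnihilator = 4 - finrank K A := by
    rw [← hV, ← Subspace.finrank_add_finrank_dualAnnihilator_eq A, Nat.add_sub_cancel_left]
  rcases hM with ⟨g, ε, hg, hε, hgε, rfl⟩ | ⟨P, ε, hP, hε, hPε, rfl⟩ | ⟨P, g, hP, hg, hPg, rfl⟩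
  · refine ⟨_, ?_, image_tensorLine_flagsOfLinePlane hV hg hε hgε⟩
    rw [finrank_tensorSubspace, hg, finrank_map₂_wedge2ₗ_self hg, hann, hε]
  · refine ⟨_, ?_, image_tensorLine_flagsOfPointPlane hV hP hε hPε⟩
    have hwedge : finrank K (map₂ wedge2ₗ P ε) = 2 := by
      have := finrank_map₂_wedge2ₗ_add_one hP hPε
      lia
    rw [finrank_tensorSubspace, hP, hwedge, hann, hε]
  · refine ⟨_, ?_, image_tensorLine_flagsOfPointLine hV hP hg hPg⟩
    rw [finrank_tensorSubspace, hP, finrank_map₂_wedge2ₗ_self hg, hann, hg]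

theorem exists_isPencil_of_add_mem_tensorLine (hV : finrank K V = 4) {Φ Ψ Θ : ProjFlag K V}
    {u v : FlagTensor K V} (hu : u ∈ Φ.tensorLine) (hv : v ∈ Ψ.tensorLine)
    (huv : u + v ∈ Θ.tensorLine) (hu0 : u ≠ 0) (hv0 : v ≠ 0) (huv0 : u + v ≠ 0) :
    ∃ M, IsPencil K V M ∧ Φ ∈ M ∧ Ψ ∈ M := by
  have hcoord (Ξ : ProjFlag K V) {t : FlagTensor K V} (ht : t ∈ Ξ.tensorLine) (ht0 : t ≠ 0) :=
    exists_eq_tmul_of_mem_tensorSubspace Ξ.finrank_pt (finrank_map₂_wedge2ₗ_self Ξ.finrank_ln)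
      (Ξ.finrank_dualAnnihilator_pl hV) ht ht0
  obtain ⟨a, b, e, ha, hb, he, rfl⟩ := hcoord Φ hu hu0
  obtain ⟨c, d, f, hc, hd, hf, rfl⟩ := hcoord Ψ hv hv0
  obtain ⟨x, y, z, -, -, -, hxyz⟩ := hcoord Θ huv huv0
  have hln (h : K ∙ b = K ∙ d) : Ψ.ln = Φ.ln :=
    eq_of_map₂_wedge2ₗ_self_eq Ψ.finrank_ln Φ.finrank_ln (hd.symm.trans (h.symm.trans hb))
  have hpl (h : K ∙ e = K ∙ f) : Ψ.pl = Φ.pl :=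
    Subspace.dualAnnihilator_inj.1 (hf.symm.trans (h.symm.trans he))
  have hpt (h : K ∙ a = K ∙ c) : Ψ.pt = Φ.pt := hc.symm.trans (h.symm.trans ha)
  rcases two_span_eq_of_tmul_add_tmul_eq hu0 hv0 hxyz with ⟨hbd, hef⟩ | ⟨hac, hef⟩ | ⟨hac, hbd⟩
  · exact ⟨_, .inl ⟨Φ.ln, Φ.pl, Φ.finrank_ln, Φ.finrank_pl, Φ.ln_le_pl, rfl⟩,
      ⟨rfl, rfl⟩, hln hbd, hpl hef⟩
  · have hptpl := Φ.pt_le_ln.trans Φ.ln_le_pl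
    exact ⟨_, .inr (.inl ⟨Φ.pt, Φ.pl, Φ.finrank_pt, Φ.finrank_pl, hptpl, rfl⟩),
      ⟨rfl, rfl⟩, hpt hac, hpl hef⟩
  · exact ⟨_, .inr (.inr ⟨Φ.pt, Φ.ln, Φ.finrank_pt, Φ.finrank_ln, Φ.pt_le_ln, rfl⟩),
      ⟨rfl, rfl⟩, hpt hac, hln hbd⟩

theorem exists_isPencil_of_projPoints_subset_range (hV : finrank K V = 4)
    {L : Submodule K (FlagTensor K V)} (hL : finrank K L = 2)
    (hLG : projPoints L ⊆ Set.range ProjFlag.tensorLine) :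
    ∃ M, IsPencil K V M ∧ ProjFlag.tensorLine '' M = projPoints L := by
  obtain ⟨u, v, rfl⟩ := exists_span_pair_eq hL
  have hLI : LinearIndependent K ![u, v] := finrank_span_pair_eq_two_iff.1 hL
  have hu0 : u ≠ 0 := hLI.ne_zero 0
  have hv0 : v ≠ 0 := hLI.ne_zero 1
  have huv0 : u + v ≠ 0 := fun h => one_ne_zero (LinearIndependent.pair_iff.1 hLI 1 1 (by simpa)).1
  have hflag {t : FlagTensor K V} (ht0 : t ≠ 0) (ht : t ∈ span K {u, v}) :
      ∃ Φ : ProjFlag K V, t ∈ Φ.tensorLine := by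
    obtain ⟨Φ, hΦ⟩ := hLG (span_singleton_mem_projPoints ht0 ht)
    exact ⟨Φ, hΦ ▸ mem_span_singleton_self t⟩
  obtain ⟨Φ, hΦ⟩ := hflag hu0 (subset_span (by simp))
  obtain ⟨Ψ, hΨ⟩ := hflag hv0 (subset_span (by simp))
  obtain ⟨Θ, hΘ⟩ := hflag huv0 (add_mem (subset_span (by simp)) (subset_span (by simp)))
  obtain ⟨M, hM, hΦM, hΨM⟩ := exists_isPencil_of_add_mem_tensorLine hV hΦ hΨ hΘ hu0 hv0 huv0
  obtain ⟨S, hS, hMS⟩ := hM.exists_image_tensorLine_eq_projPoints hV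
  have hle {Ξ : ProjFlag K V} (hΞ : Ξ ∈ M) : Ξ.tensorLine ≤ S :=
    (hMS.subset (Set.mem_image_of_mem _ hΞ)).2
  have hLS : span K {u, v} ≤ S :=
    span_le.2 (Set.insert_subset (hle hΦM hΦ) (Set.singleton_subset_iff.2 (hle hΨM hΨ)))
  have : FiniteDimensional K S := .of_finrank_pos (by lia)
  exact ⟨M, hM, by rw [hMS, eq_of_le_of_finrank_eq hLS (hL.trans hS.symm)]⟩

end FlagVariety

/-- **Proposition 4.** The `φ`-images of the pencils of flags are exactly the lines
contained in the flag variety `𝒢`. -/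
theorem line_in_flagVariety_iff_pencil
    (hV : Module.finrank K V = 4)
    (L : Submodule K (FlagTensor K V)) (hL : Module.finrank K L = 2) :
    (∀ z : Submodule K (FlagTensor K V), Module.finrank K z = 1 → z ≤ L →
        z ∈ flagVariety K V) ↔
      ∃ M : Set (ProjFlag K V), IsPencil K V M ∧
        {x : Submodule K (FlagTensor K V) | ∃ Φ ∈ M, IsFlagRep K V Φ x} =
        {z : Submodule K (FlagTensor K V) | Module.finrank K z = 1 ∧ z ≤ L} := by
  simp only [flagVariety_eq_range hV, setOf_isFlagRep_eq_image hV]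
  constructor
  · intro hLG
    exact exists_isPencil_of_projPoints_subset_range hV hL fun z hz => hLG z hz.1 hz.2
  · rintro ⟨M, -, hML⟩ z hz hzL
    exact Set.image_subset_range _ M (hML.superset ⟨hz, hzL⟩)
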